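/- For every subset S of a topological space (X, τ), Pint_δ(Pcl_δ(S)) = Pcl_δ(S) ∩ int(cl_δ(S)), where int denotes topological interior. -/

import Mathlib

open Set

variable {X : Type*}

/-- The δ-closure of a set `S`: points `x` such that every open set `A` containing `x`
satisfies `S ∩ interior (closure A) ≠ ∅`. -/
def deltaCl [TopologicalSpace X] (S : Set X) : Set X :=
  {x | ∀ A : Set X, IsOpen A → x ∈ A → (S ∩ interior (closure A)).Nonempty}

/-- The δ-interior of `S` is the complement of the δ-closure of the complement. -/
def deltaInt [TopologicalSpace X] (S : Set X) : Set X := (deltaCl Sᶜ)ᶜ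

/-- `S` is δP-open if `S ⊆ int (cl_δ S)`. -/
def DeltaPOpen [TopologicalSpace X] (S : Set X) : Prop := S ⊆ interior (deltaCl S)

/-- `S` is δP-closed if its complement is δP-open. -/
def DeltaPClosed [TopologicalSpace X] (S : Set X) : Prop := DeltaPOpen Sᶜ

/-- The δP-closure / δP-upper approximation of `S`:
the intersection of all δP-closed sets containing `S`. -/
def PclDelta [TopologicalSpace X] (S : Set X) : Set X := ⋂₀ {W | DeltaPClosed W ∧ S ⊆ W}

/-- The δP-interior / δP-lower approximation of `S`:
the union of all δP-open sets contained in `S`. -/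
def PintDelta [TopologicalSpace X] (S : Set X) : Set X := ⋃₀ {V | DeltaPOpen V ∧ V ⊆ S}

/-- `S` is preopen if `S ⊆ int (cl S)`. -/
def PreOpen [TopologicalSpace X] (S : Set X) : Prop := S ⊆ interior (closure S)

/-- `S` is preclosed if its complement is preopen. -/
def PreClosed [TopologicalSpace X] (S : Set X) : Prop := PreOpen Sᶜ

/-- The P-lower approximation of `S`: the union of all preopen sets contained in `S`. -/
def PLower [TopologicalSpace X] (S : Set X) : Set X := ⋃₀ {V | PreOpen V ∧ V ⊆ S}

/-- The P-upper approximation of `S`: the intersection of all preclosed sets containing `S`. -/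
def PUpper [TopologicalSpace X] (S : Set X) : Set X := ⋂₀ {W | PreClosed W ∧ S ⊆ W}

lemma deltaCl_mono' [TopologicalSpace X] {S T : Set X} (h : S ⊆ T) : deltaCl S ⊆ deltaCl T :=
  fun _ hx A hA hxA => (hx A hA hxA).mono (inter_subset_inter_left _ h)

lemma subset_deltaCl' [TopologicalSpace X] (S : Set X) : S ⊆ deltaCl S :=
  fun x hx _ hA hxA => ⟨x, hx, interior_maximal subset_closure hA hxA⟩

lemma deltaCl_idem' [TopologicalSpace X] (S : Set X) : deltaCl (deltaCl S) ⊆ deltaCl S := by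
  intro x hx A hA hxA
  obtain ⟨y, hy, hyA⟩ := hx A hA hxA
  obtain ⟨z, hz, hzA⟩ := hy _ isOpen_interior hyA
  refine ⟨z, hz, interior_mono ?_ hzA⟩
  exact closure_minimal interior_subset isClosed_closure

lemma isClosed_deltaCl' [TopologicalSpace X] (S : Set X) : IsClosed (deltaCl S) := by
  apply isClosed_of_closure_subset
  intro x hx A hA hxA
  obtain ⟨y, hyA, hy⟩ := mem_closure_iff.1 hx A hA hxA
  exact hy A hA hyA

lemma PclDelta_subset' [TopologicalSpace X] (S : Set X) : PclDelta S ⊆ deltaCl S := by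
  apply sInter_subset_of_mem
  refine ⟨?_, subset_deltaCl' S⟩
  exact interior_maximal (subset_deltaCl' _) (isClosed_deltaCl' S).isOpen_compl

lemma subset_PclDelta' [TopologicalSpace X] (S : Set X) : S ⊆ PclDelta S :=
  subset_sInter fun _ h => h.2

theorem pintDelta_pclDelta [TopologicalSpace X] (S : Set X) :
    PintDelta (PclDelta S) = PclDelta S ∩ interior (deltaCl S) := by
  apply Subset.antisymm
  · rintro x ⟨V, ⟨hV, hVS⟩, hx⟩
    exact ⟨hVS hx, interior_mono ((deltaCl_mono' (hVS.trans (PclDelta_subset' S))).trans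
      (deltaCl_idem' S)) (hV hx)⟩
  · intro x hx
    refine ⟨_, ⟨?_, inter_subset_left⟩, hx⟩
    intro y hy
    refine interior_maximal ?_ isOpen_interior hy.2
    intro z hz A hA hzA
    obtain ⟨w, hwS, hw⟩ := (interior_subset hz) (A ∩ interior (deltaCl S))
      (hA.inter isOpen_interior) ⟨hzA, hz⟩
    refine ⟨w, ⟨subset_PclDelta' S hwS, interior_mono ?_ hw⟩,
      interior_mono (closure_mono inter_subset_left) hw⟩
    exact closure_minimal (inter_subset_right.trans interior_subset) (isClosed_deltaCl' S)
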